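/- arXiv:1412.1499 — 2 statements merged into one kernel-verified Lean document; each statement's English description precedes it below -/
import Mathlib

section
/- For |x| < 1 let Φ(x) = Σ_{k,l≥0} (4k+1) x^{(4k+1)(4l+1)} + Σ_{k,l≥0} (4k+3) x^{(4k+3)(4l+3)} and Ψ(x) = Σ_{k,l≥0} (k+l+1) x^{(4k+1)(4l+3)}, and let F(x) = ∏_{n=1}^∞ (1 − xⁿ). Then for every complex x with |x| < 1, Φ(x) − 4 Ψ(x) = x · F(x²)⁴ F(x⁸)⁴ / F(x⁴)⁴. (Equivalently, this difference equals the eta quotient η(q_d⁸)⁴η(q_d²)⁴/η(q_d⁴)⁴ = η(q_d⁴)⁸/η(−q_d²)⁴.) -/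
open scoped BigOperators

/-- The Euler product `F(x) = ∏_{n=1}^∞ (1 − xⁿ)`. -/
noncomputable def eulerF (x : ℂ) : ℂ := ∏' n : ℕ, (1 - x ^ (n + 1))

/-- `Φ(x) = Σ_{k,l≥0} (4k+1) x^{(4k+1)(4l+1)} + Σ_{k,l≥0} (4k+3) x^{(4k+3)(4l+3)}`,
the coefficient of `(xy)²+(xw)²+(zy)²+(zw)²` in the open Gromov–Witten
potential of `ℙ¹_{2,2,2,2}`. -/
noncomputable def Phi2222 (x : ℂ) : ℂ :=
  (∑' p : ℕ × ℕ, (4 * (p.1 : ℂ) + 1) * x ^ ((4 * p.1 + 1) * (4 * p.2 + 1)))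
    + ∑' p : ℕ × ℕ, (4 * (p.1 : ℂ) + 3) * x ^ ((4 * p.1 + 3) * (4 * p.2 + 3))

/-- `Ψ(x) = Σ_{k,l≥0} (k+l+1) x^{(4k+1)(4l+3)}`, the coefficient of `xyzw` in
the open Gromov–Witten potential of `ℙ¹_{2,2,2,2}`. -/
noncomputable def Psi2222 (x : ℂ) : ℂ :=
  ∑' p : ℕ × ℕ, ((p.1 : ℂ) + (p.2 : ℂ) + 1) * x ^ ((4 * p.1 + 1) * (4 * p.2 + 3))

/-!
Put `q = -x²`. The parity of `k + l` decides the sign of `q ^ (k + l + 2kl)`, so `Φ` and `-4Ψ`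
are the two halves of `x ∑ (2k+1) q ^ (k + l + 2kl)`. Summing over `k` first gives Legendre's series
`∑ qⁿ (1 + q²ⁿ⁺¹) / (1 - q²ⁿ⁺¹)²`, whose value is `(F(q²)² / F(q))⁴`; the relation
`F(z) F(z⁴) F(-z) = F(z²)³` at `z = x²` then removes the sign.

Legendre's evaluation is the limit `N → ∞` of a terminating identity. With
`R_N = (q; q²)_N / (q²; q²)_N`, which tends to `F(q) / F(q²)²`, multiplying the `n`-th term by
`R_{N+1+n} R_{N-n}` makes the sum over `n ≤ N` equal to `(R_N (1 - q²ᴺ⁺¹))⁻²`, because both sides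
satisfy the same first-order recurrence in `N`.
-/

open Filter Topology Finset

section FiniteIdentity

variable {K : Type*} [Field K]

/-- The ratio `(q; q²)_N / (q²; q²)_N` of `q`-Pochhammer symbols. -/
def oddEvenRatio (q : K) (N : ℕ) : K :=
  ∏ j ∈ range N, (1 - q ^ (2 * j + 1)) / (1 - q ^ (2 * j + 2))

/-- The summand of Legendre's series for the fourth power of the triangular-number theta series
`∑ q ^ (n * (n + 1) / 2)`. -/
def legendreTerm (q : K) (n : ℕ) : K :=
  q ^ n * (1 + q ^ (2 * n + 1)) / (1 - q ^ (2 * n + 1)) ^ 2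

/-- The summand, for `n ≤ N`, of a finite form of Legendre's series: as `N → ∞` the two
ratios tend to a constant. -/
def finiteLegendreTerm (q : K) (N n : ℕ) : K :=
  legendreTerm q n * oddEvenRatio q (N + 1 + n) * oddEvenRatio q (N - n)

/-- The companion of `finiteLegendreTerm` in the sense of Wilf and Zeilberger, for `m ≤ N + 1`:
its differences in `m` measure the failure of `finiteLegendreTerm` to satisfy the first-order
recurrence in `N` that its sum satisfies. -/
def legendreCompanion (q : K) (N m : ℕ) : K :=
  q ^ (2 * N + 2 - m) * (1 - q ^ (2 * m)) * (1 - q ^ (4 * N + 5))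
    / ((1 - q ^ (2 * N + 2)) * (1 - q ^ (2 * N + 3)) ^ 3)
    * oddEvenRatio q (N + 1 + m) * oddEvenRatio q (N + 1 - m)

variable {q : K}

lemma one_sub_pow_ne_zero {R : Type*} [Ring R] {q : R} (hq : ¬IsOfFinOrder q) {n : ℕ}
    (hn : n ≠ 0) : 1 - q ^ n ≠ 0 := fun h ↦
  hq (isOfFinOrder_iff_pow_eq_one.mpr ⟨n, hn.bot_lt, (sub_eq_zero.mp h).symm⟩)

lemma oddEvenRatio_succ (q : K) (N : ℕ) :
    oddEvenRatio q (N + 1)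
      = oddEvenRatio q N * ((1 - q ^ (2 * N + 1)) / (1 - q ^ (2 * N + 2))) :=
  prod_range_succ _ N

lemma oddEvenRatio_ne_zero (hq : ¬IsOfFinOrder q) (N : ℕ) : oddEvenRatio q N ≠ 0 :=
  prod_ne_zero_iff.mpr fun j _ ↦
    div_ne_zero (one_sub_pow_ne_zero hq (by lia)) (one_sub_pow_ne_zero hq (by lia))

lemma finiteLegendreTerm_succ_sub (hq : ¬IsOfFinOrder q) {N m : ℕ} (hm : m ≤ N) :
    finiteLegendreTerm q (N + 1) m
        - ((1 - q ^ (2 * N + 2)) / (1 - q ^ (2 * N + 3))) ^ 2 * finiteLegendreTerm q N m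
      = legendreCompanion q N m - legendreCompanion q N (m + 1) := by
  obtain ⟨d, rfl⟩ := Nat.exists_eq_add_of_le hm
  have upper_succ : oddEvenRatio q (m + d + 1 + 1 + m)
      = oddEvenRatio q (m + d + 1 + m)
        * ((1 - q ^ (4 * m + 2 * d + 3)) / (1 - q ^ (4 * m + 2 * d + 4))) := by
    rw [show m + d + 1 + 1 + m = m + d + 1 + m + 1 by ring, oddEvenRatio_succ]
    ring_nf
  simp only [finiteLegendreTerm, legendreCompanion, legendreTerm,
    show m + d + 1 - m = d + 1 by lia, show m + d - m = d by lia,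
    show m + d + 1 - (m + 1) = d by lia, show m + d + 1 + (m + 1) = m + d + 1 + 1 + m by ring,
    show 2 * (m + d) + 2 - m = m + 2 * d + 2 by lia,
    show 2 * (m + d) + 2 - (m + 1) = m + 2 * d + 1 by lia, upper_succ, oddEvenRatio_succ q d]
  have h1 : 1 - q ^ (2 * (m + d) + 2) ≠ 0 := one_sub_pow_ne_zero hq (by lia)
  have h2 : 1 - q ^ (2 * (m + d) + 3) ≠ 0 := one_sub_pow_ne_zero hq (by lia)
  have h3 : 1 - q ^ (2 * d + 2) ≠ 0 := one_sub_pow_ne_zero hq (by lia)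
  have h4 : 1 - q ^ (4 * m + 2 * d + 4) ≠ 0 := one_sub_pow_ne_zero hq (by lia)
  have h5 : 1 - q ^ (2 * m + 1) ≠ 0 := one_sub_pow_ne_zero hq (by lia)
  field_simp
  ring

lemma legendreCompanion_zero (q : K) (N : ℕ) : legendreCompanion q N 0 = 0 := by
  simp [legendreCompanion]

lemma finiteLegendreTerm_succ_self (hq : ¬IsOfFinOrder q) (N : ℕ) :
    finiteLegendreTerm q (N + 1) (N + 1) = legendreCompanion q N (N + 1) := by
  simp only [finiteLegendreTerm, legendreCompanion, legendreTerm, Nat.sub_self,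
    show N + 1 + 1 + (N + 1) = N + 1 + (N + 1) + 1 by ring, oddEvenRatio_succ q (N + 1 + (N + 1)),
    show 2 * N + 2 - (N + 1) = N + 1 by lia]
  have h1 : 1 - q ^ (2 * N + 2) ≠ 0 := one_sub_pow_ne_zero hq (by lia)
  have h2 : 1 - q ^ (2 * N + 3) ≠ 0 := one_sub_pow_ne_zero hq (by lia)
  have h3 : 1 - q ^ (2 * (N + 1 + (N + 1)) + 2) ≠ 0 := one_sub_pow_ne_zero hq (by lia)
  have h4 : 1 - q ^ (2 * (N + 1) + 1) ≠ 0 := one_sub_pow_ne_zero hq (by lia)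
  field_simp
  ring

lemma sum_finiteLegendreTerm_succ (hq : ¬IsOfFinOrder q) (N : ℕ) :
    ∑ n ∈ range (N + 2), finiteLegendreTerm q (N + 1) n
      = ((1 - q ^ (2 * N + 2)) / (1 - q ^ (2 * N + 3))) ^ 2
        * ∑ n ∈ range (N + 1), finiteLegendreTerm q N n := by
  have telescope := sum_congr rfl fun m (hm : m ∈ range (N + 1)) ↦
    finiteLegendreTerm_succ_sub hq (Nat.le_of_lt_succ (mem_range.mp hm))
  rw [sum_sub_distrib, ← mul_sum, sum_range_sub', legendreCompanion_zero] at telescope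
  rw [sum_range_succ, finiteLegendreTerm_succ_self hq]
  linear_combination telescope

theorem sum_finiteLegendreTerm (hq : ¬IsOfFinOrder q) (N : ℕ) :
    ∑ n ∈ range (N + 1), finiteLegendreTerm q N n
      = ((oddEvenRatio q N * (1 - q ^ (2 * N + 1))) ^ 2)⁻¹ := by
  induction N with
  | zero =>
    have h1 : 1 - q ≠ 0 := by simpa using one_sub_pow_ne_zero hq one_ne_zero
    have h2 : 1 - q ^ 2 ≠ 0 := one_sub_pow_ne_zero hq two_ne_zero
    simp only [finiteLegendreTerm, legendreTerm, oddEvenRatio, zero_add, add_zero, Nat.sub_self,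
      sum_range_one, prod_range_one, prod_range_zero, mul_zero, pow_zero, pow_one]
    field_simp
    ring
  | succ N ih =>
    rw [sum_finiteLegendreTerm_succ hq, ih, oddEvenRatio_succ]
    have hR := oddEvenRatio_ne_zero hq N
    have h1 : 1 - q ^ (2 * N + 1) ≠ 0 := one_sub_pow_ne_zero hq (by lia)
    have h2 : 1 - q ^ (2 * N + 2) ≠ 0 := one_sub_pow_ne_zero hq (by lia)
    have h3 : 1 - q ^ (2 * N + 3) ≠ 0 := one_sub_pow_ne_zero hq (by lia)
    rw [show 2 * (N + 1) + 1 = 2 * N + 3 by ring]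
    field_simp

end FiniteIdentity

section NormLtOne

variable {𝕜 : Type*} [NormedField 𝕜] {q : 𝕜}

lemma norm_pow_lt_one (hq : ‖q‖ < 1) {n : ℕ} (hn : n ≠ 0) : ‖q ^ n‖ < 1 := by
  simpa only [norm_pow] using pow_lt_one₀ (norm_nonneg q) hq hn

lemma norm_neg_sq_lt_one (hq : ‖q‖ < 1) : ‖-q ^ 2‖ < 1 := by
  simpa only [norm_neg] using norm_pow_lt_one hq two_ne_zero

lemma not_isOfFinOrder_of_norm_lt_one (hq : ‖q‖ < 1) : ¬IsOfFinOrder q := fun h ↦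
  hq.ne h.norm_eq_one

lemma tendsto_two_mul_atTop : Tendsto (fun n : ℕ ↦ 2 * n) atTop atTop :=
  tendsto_id.const_mul_atTop' two_pos

lemma tendsto_pow_two_mul_add_one (hq : ‖q‖ < 1) :
    Tendsto (fun n : ℕ ↦ q ^ (2 * n + 1)) atTop (𝓝 0) :=
  (tendsto_pow_atTop_nhds_zero_of_norm_lt_one hq).comp
    ((tendsto_add_atTop_nat 1).comp tendsto_two_mul_atTop)

end NormLtOne

section EulerProduct

/-- The partial product `(q; q)_n` of the Euler product. -/
def eulerPartial {R : Type*} [CommRing R] (q : R) (n : ℕ) : R := ∏ j ∈ range n, (1 - q ^ (j + 1))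

lemma eulerPartial_succ {R : Type*} [CommRing R] (q : R) (n : ℕ) :
    eulerPartial q (n + 1) = eulerPartial q n * (1 - q ^ (n + 1)) :=
  prod_range_succ _ n

lemma eulerPartial_mul_eulerPartial_neg {R : Type*} [CommRing R] (q : R) (n : ℕ) :
    eulerPartial q (2 * n) * eulerPartial (q ^ 4) n * eulerPartial (-q) (2 * n)
      = eulerPartial (q ^ 2) (2 * n) * eulerPartial (q ^ 2) n ^ 2 := by
  induction n with
  | zero => simp [eulerPartial]
  | succ n ih =>
    have odd : (-q) ^ (2 * n + 1) = -q ^ (2 * n + 1) := Odd.neg_pow ⟨n, rfl⟩ q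
    have even : (-q) ^ (2 * n + 1 + 1) = q ^ (2 * n + 1 + 1) := Even.neg_pow ⟨n + 1, by ring⟩ q
    simp only [mul_add_one, eulerPartial_succ, odd, even]
    linear_combination (1 - q ^ (2 * n + 1)) * (1 - (q ^ 4) ^ (n + 1)) * (1 + q ^ (2 * n + 1))
      * (1 - q ^ (2 * n + 2)) ^ 2 * ih

lemma oddEvenRatio_mul_eulerPartial_sq {K : Type*} [Field K] {q : K} (hq : ¬IsOfFinOrder q)
    (N : ℕ) :
    oddEvenRatio q N * eulerPartial (q ^ 2) N ^ 2 = eulerPartial q (2 * N) := by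
  induction N with
  | zero => simp [oddEvenRatio, eulerPartial]
  | succ N ih =>
    have h : 1 - q ^ (2 * N + 2) ≠ 0 := one_sub_pow_ne_zero hq (by lia)
    rw [oddEvenRatio_succ, mul_add_one, eulerPartial_succ, eulerPartial_succ, eulerPartial_succ,
      ← ih]
    field_simp
    ring

variable {q : ℂ}

lemma tendsto_eulerPartial (hq : ‖q‖ < 1) :
    Tendsto (eulerPartial q) atTop (𝓝 (eulerF q)) :=
  (ModularForm.multipliable_one_sub_pow hq).hasProd.tendsto_prod_nat

lemma eulerF_ne_zero (hq : ‖q‖ < 1) : eulerF q ≠ 0 := by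
  have hsum : Summable fun n : ℕ ↦ ‖-q ^ (n + 1)‖ := by
    simpa using (summable_nat_add_iff 1).mpr (summable_geometric_of_lt_one (norm_nonneg q) hq)
  simpa only [eulerF, sub_eq_add_neg] using tprod_one_add_ne_zero_of_summable
    (fun n ↦ by
      simpa only [sub_eq_add_neg] using
        one_sub_pow_ne_zero (not_isOfFinOrder_of_norm_lt_one hq) n.succ_ne_zero) hsum

theorem eulerF_mul_eulerF_neg (hq : ‖q‖ < 1) :
    eulerF q * eulerF (q ^ 4) * eulerF (-q) = eulerF (q ^ 2) ^ 3 := by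
  have h2 := tendsto_eulerPartial (norm_pow_lt_one hq two_ne_zero)
  have h4 := tendsto_eulerPartial (norm_pow_lt_one hq four_ne_zero)
  have hneg := tendsto_eulerPartial (q := -q) (by rwa [norm_neg])
  have lhs := (((tendsto_eulerPartial hq).comp tendsto_two_mul_atTop).mul h4).mul
    (hneg.comp tendsto_two_mul_atTop)
  have rhs := (h2.comp tendsto_two_mul_atTop).mul (h2.pow 2)
  rw [pow_succ' (eulerF _)]
  exact tendsto_nhds_unique (lhs.congr (eulerPartial_mul_eulerPartial_neg q)) rhs

lemma eulerF_sq_sq_div_eulerF_neg (hq : ‖q‖ < 1) :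
    eulerF (q ^ 2) ^ 2 / eulerF (-q) = eulerF q * eulerF (q ^ 4) / eulerF (q ^ 2) := by
  rw [div_eq_div_iff (eulerF_ne_zero (by rwa [norm_neg]))
    (eulerF_ne_zero (norm_pow_lt_one hq two_ne_zero)), eulerF_mul_eulerF_neg hq]
  ring

lemma tendsto_oddEvenRatio (hq : ‖q‖ < 1) :
    Tendsto (oddEvenRatio q) atTop (𝓝 (eulerF q / eulerF (q ^ 2) ^ 2)) := by
  have hq2 := norm_pow_lt_one hq two_ne_zero
  refine (((tendsto_eulerPartial hq).comp tendsto_two_mul_atTop).div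
    ((tendsto_eulerPartial hq2).pow 2) (pow_ne_zero 2 (eulerF_ne_zero hq2))).congr fun N ↦ ?_
  have hN : eulerPartial (q ^ 2) N ≠ 0 := prod_ne_zero_iff.mpr fun j _ ↦
    one_sub_pow_ne_zero (not_isOfFinOrder_of_norm_lt_one hq2) j.succ_ne_zero
  rw [Pi.div_apply, Function.comp_apply, ← oddEvenRatio_mul_eulerPartial_sq
    (not_isOfFinOrder_of_norm_lt_one hq), mul_div_cancel_right₀ _ (pow_ne_zero 2 hN)]

end EulerProduct

section LegendreSeries

lemma tendsto_sum_range_mul_add_mul_sub {R : Type*} [NormedRing R] [CompleteSpace R]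
    {a b : ℕ → R} {L : R} (ha : Summable fun n ↦ ‖a n‖) (hb : Tendsto b atTop (𝓝 L)) :
    Tendsto (fun N ↦ ∑ n ∈ range (N + 1), a n * b (N + 1 + n) * b (N - n)) atTop
      (𝓝 ((∑' n, a n) * L * L)) := by
  obtain ⟨B, hB⟩ := hb.norm.bddAbove_range
  have norm_le (n : ℕ) : ‖b n‖ ≤ B := hB ⟨n, rfl⟩
  have pointwise (n : ℕ) : Tendsto (fun N ↦ (range (N + 1) : Set ℕ).indicator
      (fun n ↦ a n * b (N + 1 + n) * b (N - n)) n) atTop (𝓝 (a n * L * L)) := by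
    have upper : Tendsto (fun N ↦ b (N + 1 + n)) atTop (𝓝 L) :=
      hb.comp ((tendsto_add_atTop_nat n).comp (tendsto_add_atTop_nat 1))
    have lower : Tendsto (fun N ↦ b (N - n)) atTop (𝓝 L) := hb.comp (tendsto_sub_atTop_nat n)
    refine ((upper.const_mul (a n)).mul lower).congr' ?_
    filter_upwards [eventually_ge_atTop n] with N hN
    have hmem : n ∈ (range (N + 1) : Set ℕ) := mem_coe.mpr (mem_range_succ_iff.mpr hN)
    rw [Set.indicator_of_mem hmem]
  have dominated (N n : ℕ) : ‖(range (N + 1) : Set ℕ).indicator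
      (fun n ↦ a n * b (N + 1 + n) * b (N - n)) n‖ ≤ ‖a n‖ * B * B := by
    refine (norm_indicator_le_norm_self _ n).trans ((norm_mul₃_le).trans ?_)
    have : 0 ≤ B := (norm_nonneg _).trans (norm_le 0)
    gcongr <;> exact norm_le _
  have key := tendsto_tsum_of_dominated_convergence ((ha.mul_right B).mul_right B) pointwise
    (.of_forall dominated)
  simpa only [← sum_eq_tsum_indicator, (ha.of_norm.mul_right L).tsum_mul_right,
    ha.of_norm.tsum_mul_right] using key

lemma summable_norm_legendreTerm {𝕜 : Type*} [NormedField 𝕜] {q : 𝕜} (hq : ‖q‖ < 1) :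
    Summable fun n ↦ ‖legendreTerm q n‖ := by
  have hpow := tendsto_pow_two_mul_add_one hq
  have hfactor := (hpow.const_add 1).div ((hpow.const_sub 1).pow 2) (by simp)
  refine summable_of_isBigO_nat (summable_geometric_of_lt_one (norm_nonneg q) hq) ?_
  simpa [legendreTerm, mul_div_assoc] using
    ((Asymptotics.isBigO_refl (fun n ↦ ‖q‖ ^ n) atTop).mul (hfactor.norm.isBigO_one ℝ))

theorem tsum_legendreTerm {q : ℂ} (hq : ‖q‖ < 1) :
    ∑' n, legendreTerm q n = (eulerF (q ^ 2) ^ 2 / eulerF q) ^ 4 := by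
  have hR := tendsto_oddEvenRatio hq
  have hF := eulerF_ne_zero hq
  have hF2 := eulerF_ne_zero (norm_pow_lt_one hq two_ne_zero)
  have lhs : Tendsto (fun N ↦ ∑ n ∈ range (N + 1), finiteLegendreTerm q N n) atTop _ :=
    tendsto_sum_range_mul_add_mul_sub (summable_norm_legendreTerm hq) hR
  have rhs := ((hR.mul ((tendsto_pow_two_mul_add_one hq).const_sub 1)).pow 2).inv₀
    (by simp [hF, hF2])
  have key := tendsto_nhds_unique
    (lhs.congr (sum_finiteLegendreTerm (not_isOfFinOrder_of_norm_lt_one hq))) rhs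
  field_simp at key ⊢
  linear_combination key

end LegendreSeries

section DoubleSeries

/-- The summand of the double series obtained by expanding each term of Legendre's series in
powers of `q`. -/
def legendreDoubleTerm {R : Type*} [Semiring R] (q : R) (p : ℕ × ℕ) : R :=
  (2 * p.1 + 1) * q ^ (p.1 + p.2 + 2 * p.1 * p.2)

variable {𝕜 : Type*} [NormedField 𝕜] {q : 𝕜}

lemma hasSum_legendreDoubleTerm_fst (hq : ‖q‖ < 1) (l : ℕ) :
    HasSum (fun k ↦ legendreDoubleTerm q (k, l)) (legendreTerm q l) := by
  have hr : ‖q ^ (2 * l + 1)‖ < 1 := norm_pow_lt_one hq (by lia)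
  have hne : 1 - q ^ (2 * l + 1) ≠ 0 :=
    one_sub_pow_ne_zero (not_isOfFinOrder_of_norm_lt_one hq) (by lia)
  have hsum := ((hasSum_coe_mul_geometric_of_norm_lt_one hr).mul_left (2 * q ^ l)).add
    ((hasSum_geometric_of_norm_lt_one hr).mul_left (q ^ l))
  have hvalue : 2 * q ^ l * (q ^ (2 * l + 1) / (1 - q ^ (2 * l + 1)) ^ 2)
      + q ^ l * (1 - q ^ (2 * l + 1))⁻¹ = legendreTerm q l := by
    rw [legendreTerm]
    field_simp
    ring
  rw [hvalue] at hsum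
  refine hsum.congr_fun fun k ↦ ?_
  rw [legendreDoubleTerm]
  ring

variable [CompleteSpace 𝕜]

lemma summable_legendreDoubleTerm (hq : ‖q‖ < 1) : Summable (legendreDoubleTerm q) := by
  have hgeom : Summable fun k : ℕ ↦ ‖q ^ k‖ := summable_norm_geometric_of_norm_lt_one hq
  have hlin : Summable fun k : ℕ ↦ ‖(2 * k + 1) * q ^ k‖ := by
    have hk := summable_norm_pow_mul_geometric_of_norm_lt_one 1 hq
    refine .of_nonneg_of_le (fun _ ↦ norm_nonneg _) (fun k ↦ ?_) ((hk.mul_left ‖(2 : 𝕜)‖).add hgeom)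
    rw [add_mul, one_mul, mul_assoc, ← norm_mul, pow_one]
    exact norm_add_le _ _
  refine .of_norm_bounded (hlin.mul_norm hgeom) fun p ↦ ?_
  rw [legendreDoubleTerm, pow_add, pow_add, ← mul_assoc, ← mul_assoc, norm_mul]
  refine mul_le_of_le_one_right (norm_nonneg _) ?_
  simpa only [norm_pow] using pow_le_one₀ (norm_nonneg q) hq.le

theorem tsum_legendreDoubleTerm (hq : ‖q‖ < 1) :
    ∑' p, legendreDoubleTerm q p = ∑' n, legendreTerm q n := by
  have hs := summable_legendreDoubleTerm hq
  calc ∑' p, legendreDoubleTerm q p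
      = ∑' k, ∑' l, legendreDoubleTerm q (k, l) := hs.tsum_prod
    _ = ∑' l, ∑' k, legendreDoubleTerm q (k, l) :=
        (Summable.tsum_comm (f := fun k l ↦ legendreDoubleTerm q (k, l)) hs).symm
    _ = ∑' l, legendreTerm q l := tsum_congr fun l ↦ (hasSum_legendreDoubleTerm_fst hq l).tsum_eq

end DoubleSeries

section ParitySplitting

variable {E : Type*} [AddCommGroup E] [UniformSpace E] [IsUniformAddGroup E] [CompleteSpace E]
  [T2Space E] {f : ℕ × ℕ → E}

lemma injective_two_mul : Function.Injective fun n : ℕ ↦ 2 * n := mul_right_injective₀ two_ne_zero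

lemma injective_two_mul_add_one : Function.Injective fun n : ℕ ↦ 2 * n + 1 :=
  (add_left_injective 1).comp injective_two_mul

lemma tsum_fst_even_add_odd (hf : Summable f) :
    ∑' p, f p = ∑' p : ℕ × ℕ, f (2 * p.1, p.2) + ∑' p : ℕ × ℕ, f (2 * p.1 + 1, p.2) := by
  have heven : Summable fun p : ℕ × ℕ ↦ f (2 * p.1, p.2) :=
    hf.comp_injective (injective_two_mul.prodMap Function.injective_id)
  have hodd : Summable fun p : ℕ × ℕ ↦ f (2 * p.1 + 1, p.2) :=
    hf.comp_injective (injective_two_mul_add_one.prodMap Function.injective_id)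
  calc ∑' p, f p = ∑' k, ∑' l, f (k, l) := hf.tsum_prod
    _ = ∑' k, ∑' l, f (2 * k, l) + ∑' k, ∑' l, f (2 * k + 1, l) :=
        (tsum_even_add_odd (f := fun k ↦ ∑' l, f (k, l)) heven.prod hodd.prod).symm
    _ = _ := congrArg₂ (· + ·) heven.tsum_prod.symm hodd.tsum_prod.symm

lemma tsum_snd_even_add_odd (hf : Summable f) :
    ∑' p, f p = ∑' p : ℕ × ℕ, f (p.1, 2 * p.2) + ∑' p : ℕ × ℕ, f (p.1, 2 * p.2 + 1) := by
  have heven : Summable fun p : ℕ × ℕ ↦ f (p.1, 2 * p.2) :=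
    hf.comp_injective (Function.injective_id.prodMap injective_two_mul)
  have hodd : Summable fun p : ℕ × ℕ ↦ f (p.1, 2 * p.2 + 1) :=
    hf.comp_injective (Function.injective_id.prodMap injective_two_mul_add_one)
  calc ∑' p, f p = ∑' k, ∑' l, f (k, l) := hf.tsum_prod
    _ = ∑' k, (∑' l, f (k, 2 * l) + ∑' l, f (k, 2 * l + 1)) := tsum_congr fun k ↦
        (tsum_even_add_odd (f := fun l ↦ f (k, l)) (heven.prod_factor k) (hodd.prod_factor k)).symm
    _ = ∑' k, ∑' l, f (k, 2 * l) + ∑' k, ∑' l, f (k, 2 * l + 1) := heven.prod.tsum_add hodd.prod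
    _ = _ := congrArg₂ (· + ·) heven.tsum_prod.symm hodd.tsum_prod.symm

lemma tsum_prod_parity (hf : Summable f) :
    ∑' p, f p
      = (∑' p : ℕ × ℕ, f (2 * p.1, 2 * p.2) + ∑' p : ℕ × ℕ, f (2 * p.1, 2 * p.2 + 1))
        + (∑' p : ℕ × ℕ, f (2 * p.1 + 1, 2 * p.2)
          + ∑' p : ℕ × ℕ, f (2 * p.1 + 1, 2 * p.2 + 1)) := by
  rw [tsum_fst_even_add_odd hf,
    tsum_snd_even_add_odd (f := fun p ↦ f (2 * p.1, p.2))
      (hf.comp_injective (injective_two_mul.prodMap Function.injective_id)),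
    tsum_snd_even_add_odd (f := fun p ↦ f (2 * p.1 + 1, p.2))
      (hf.comp_injective (injective_two_mul_add_one.prodMap Function.injective_id))]

end ParitySplitting

section Potential

lemma mul_legendreDoubleTerm_neg_sq {R : Type*} [CommRing R] (x : R) (k l : ℕ) :
    x * legendreDoubleTerm (-x ^ 2) (k, l)
      = (-1) ^ (k + l) * (2 * k + 1) * x ^ ((2 * k + 1) * (2 * l + 1)) := by
  have hsign : (-1 : R) ^ (k + l + 2 * k * l) = (-1) ^ (k + l) := by
    rw [pow_add, mul_assoc, Even.neg_one_pow (even_two_mul _), mul_one]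
  rw [legendreDoubleTerm, neg_pow, hsign]
  ring

lemma Phi2222_eq_tsum (x : ℂ) :
    Phi2222 x = x * (∑' p : ℕ × ℕ, legendreDoubleTerm (-x ^ 2) (2 * p.1, 2 * p.2)
      + ∑' p : ℕ × ℕ, legendreDoubleTerm (-x ^ 2) (2 * p.1 + 1, 2 * p.2 + 1)) := by
  rw [Phi2222, mul_add, ← tsum_mul_left, ← tsum_mul_left]
  congr 1 <;> refine tsum_congr fun p ↦ ?_
  · rw [mul_legendreDoubleTerm_neg_sq, Even.neg_one_pow ⟨p.1 + p.2, by ring⟩]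
    push_cast
    ring
  · rw [mul_legendreDoubleTerm_neg_sq, Even.neg_one_pow ⟨p.1 + p.2 + 1, by ring⟩]
    push_cast
    ring

lemma four_mul_Psi2222_eq_tsum {x : ℂ} (hx : ‖x‖ < 1) :
    4 * Psi2222 x = -x * (∑' p : ℕ × ℕ, legendreDoubleTerm (-x ^ 2) (2 * p.1, 2 * p.2 + 1)
      + ∑' p : ℕ × ℕ, legendreDoubleTerm (-x ^ 2) (2 * p.1 + 1, 2 * p.2)) := by
  have hs := summable_legendreDoubleTerm (norm_neg_sq_lt_one hx)
  have hevenOdd : Summable fun p : ℕ × ℕ ↦ legendreDoubleTerm (-x ^ 2) (2 * p.1, 2 * p.2 + 1) :=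
    hs.comp_injective (injective_two_mul.prodMap injective_two_mul_add_one)
  have hoddEven : Summable fun p : ℕ × ℕ ↦ legendreDoubleTerm (-x ^ 2) (2 * p.2 + 1, 2 * p.1) :=
    hs.comp_injective
      ((injective_two_mul_add_one.prodMap injective_two_mul).comp Prod.swap_injective)
  have hswap : ∑' p : ℕ × ℕ, legendreDoubleTerm (-x ^ 2) (2 * p.1 + 1, 2 * p.2)
      = ∑' p : ℕ × ℕ, legendreDoubleTerm (-x ^ 2) (2 * p.2 + 1, 2 * p.1) :=
    ((Equiv.prodComm ℕ ℕ).tsum_eq fun p : ℕ × ℕ ↦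
      legendreDoubleTerm (-x ^ 2) (2 * p.1 + 1, 2 * p.2)).symm
  rw [Psi2222, hswap, ← hevenOdd.tsum_add hoddEven, ← tsum_mul_left, ← tsum_mul_left]
  refine tsum_congr fun p ↦ ?_
  rw [neg_mul, mul_add x, mul_legendreDoubleTerm_neg_sq, mul_legendreDoubleTerm_neg_sq,
    Odd.neg_one_pow ⟨p.1 + p.2, by ring⟩, Odd.neg_one_pow ⟨p.1 + p.2, by ring⟩]
  push_cast
  ring

theorem Phi2222_sub_four_mul_Psi2222 {x : ℂ} (hx : ‖x‖ < 1) :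
    Phi2222 x - 4 * Psi2222 x = x * ∑' p, legendreDoubleTerm (-x ^ 2) p := by
  have hsplit := tsum_prod_parity (f := legendreDoubleTerm (-x ^ 2))
    (summable_legendreDoubleTerm (norm_neg_sq_lt_one hx))
  rw [Phi2222_eq_tsum, four_mul_Psi2222_eq_tsum hx, hsplit]
  ring

end Potential

/-- `Φ(x) − 4Ψ(x) = x F(x²)⁴F(x⁸)⁴/F(x⁴)⁴`, i.e.
`ψ − 4φ = η(q_d⁸)⁴η(q_d²)⁴/η(q_d⁴)⁴`. -/
theorem phi_sub_four_psi (x : ℂ) (hx : ‖x‖ < 1) :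
    Phi2222 x - 4 * Psi2222 x
      = x * eulerF (x ^ 2) ^ 4 * eulerF (x ^ 8) ^ 4 / eulerF (x ^ 4) ^ 4 := by
  have hq := norm_neg_sq_lt_one hx
  have hx2 := norm_pow_lt_one hx two_ne_zero
  calc Phi2222 x - 4 * Psi2222 x
      = x * ∑' p, legendreDoubleTerm (-x ^ 2) p := Phi2222_sub_four_mul_Psi2222 hx
    _ = x * ∑' n, legendreTerm (-x ^ 2) n := by rw [tsum_legendreDoubleTerm hq]
    _ = x * (eulerF ((x ^ 2) ^ 2) ^ 2 / eulerF (-x ^ 2)) ^ 4 := by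
        rw [tsum_legendreTerm hq, neg_sq]
    _ = x * (eulerF (x ^ 2) * eulerF ((x ^ 2) ^ 4) / eulerF ((x ^ 2) ^ 2)) ^ 4 := by
        rw [eulerF_sq_sq_div_eulerF_neg hx2]
    _ = x * eulerF (x ^ 2) ^ 4 * eulerF (x ^ 8) ^ 4 / eulerF (x ^ 4) ^ 4 := by
        rw [← pow_mul, ← pow_mul]
        ring
end

section
/- For |x| < 1 let Ψ(x) = Σ_{k,l≥0} (k+l+1) x^{(4k+1)(4l+3)} and F(x) = ∏_{n=1}^∞ (1 − xⁿ). Then for every complex x with |x| < 1, Ψ(x) = x³ · F(x⁸)² F(x^{16})⁴ / F(x⁴)². (This expresses the coefficient of xyzw in the open Gromov–Witten potential of ℙ¹_{2,2,2,2} as the eta quotient η(q_d⁸)²η(q_d^{16})⁴/η(q_d⁴)², hence as a modular form for Γ(2) in the Kähler parameter q = q_d⁸.) -/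
open scoped BigOperators

/-!
With `q = x⁴`, `a = q³`, `b = q` and `Q = ab = q⁴`, the series is
`Ψ(x) = x³ ∑_{k,l ≥ 0} (k + l + 1) Q^{kl} aᵏ bˡ`. Expanding each term of the bilateral series
`∑_{n ∈ ℤ} bⁿ / (1 - a Qⁿ)²` geometrically, in powers of `a Qⁿ` for `n ≥ 0` and of its inverse for
`n < 0`, produces exactly this double sum. The bilateral series equals
`(Q; Q)_∞⁴ / ((a; Q)_∞ (b; Q)_∞)²`, a confluent case of Kronecker's identity: it is the limit
`N → ∞` of a partial fraction identity at the nodes `Q⁻ᵏ`, `|k| ≤ N`. Finally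
`F(q) = (q; q⁴)_∞ (q³; q⁴)_∞ F(q²)` turns the product into the eta quotient.
-/

open Filter Finset Topology

section PartialFractions

variable {ι K : Type*} [DecidableEq ι] [Field K]

-- Lagrange interpolation of `∏_{k ≠ l} (X - c x_k)` at the nodes `x_k`, evaluated at `c x_l`.
theorem sum_prod_erase_mul_div_sub_mul_sq {s : Finset ι} {x : ι → K} (hx : Set.InjOn x s) {c : K}
    {l : ι} (hl : l ∈ s) (hc : ∀ k ∈ s, c * x l ≠ x k) :
    ∑ i ∈ s, (∏ k ∈ s.erase i, (x i - c * x k) / (x i - x k)) *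
        ((1 - c) ^ 2 * x i * x l / (x i - c * x l) ^ 2) =
      ∏ k ∈ s.erase l, (c * x l - c * x k) / (c * x l - x k) := by
  set S : Polynomial K := ∏ k ∈ s.erase l, (Polynomial.X - Polynomial.C (c * x k)) with hS
  have eval_S (z : K) : S.eval z = ∏ k ∈ s.erase l, (z - c * x k) := by
    simp [hS, Polynomial.eval_prod]
  have degree_S : S.degree < #s := by
    refine Polynomial.degree_le_natDegree.trans_lt ?_
    rw [hS, Polynomial.natDegree_finsetProd_X_sub_C_eq_card]
    exact_mod_cast card_erase_lt_of_mem hl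
  have eval_S_node {i : ι} (hi : i ∈ s) : S.eval (x i) =
      (∏ k ∈ s.erase i, (x i - c * x k)) * ((1 - c) * x i) / (x i - c * x l) := by
    rw [eq_div_iff (sub_ne_zero.2 (hc i hi).symm), eval_S, prod_erase_mul _ _ hl,
      ← prod_erase_mul _ _ hi]
    ring
  have interpolation := Lagrange.eval_interpolate_not_at_node (fun i ↦ S.eval (x i)) hc
  rw [← Lagrange.eq_interpolate hx degree_S, Lagrange.eval_nodal, eval_S] at interpolation
  have hP : ∏ k ∈ s.erase l, (c * x l - x k) ≠ 0 :=
    prod_ne_zero_iff.2 fun k hk ↦ sub_ne_zero.2 (hc k (mem_of_mem_erase hk))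
  rw [prod_div_distrib, interpolation, ← mul_prod_erase s _ hl, mul_assoc, mul_left_comm,
    mul_div_cancel_left₀ _ hP, mul_sum]
  refine sum_congr rfl fun i hi ↦ ?_
  have hi' : x i - c * x l ≠ 0 := sub_ne_zero.2 (hc i hi).symm
  rw [eval_S_node hi, Lagrange.nodalWeight, prod_div_distrib, prod_inv_distrib,
    ← neg_sub (x i) (c * x l)]
  field_simp
  ring

end PartialFractions

theorem prod_Icc_erase {M : Type*} [CommMonoid M] (f : ℤ → M) (i : ℤ) (p r : ℕ) :
    ∏ k ∈ (Icc (i - p) (i + r)).erase i, f k =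
      (∏ j ∈ range p, f (i - (j + 1))) * ∏ j ∈ range r, f (i + (j + 1)) := by
  have split : (Icc (i - p) (i + r)).erase i =
      (range p).image (fun j : ℕ ↦ i - (j + 1)) ∪ (range r).image (fun j : ℕ ↦ i + (j + 1)) := by
    ext k
    simp only [mem_erase, mem_Icc, mem_union, mem_image, mem_range]
    refine ⟨fun ⟨hne, _, _⟩ ↦ ?_, by rintro (⟨j, hj, rfl⟩ | ⟨j, hj, rfl⟩) <;> omega⟩
    rcases hne.lt_or_gt with hlt | hgt
    · exact .inl ⟨(i - k - 1).toNat, by omega, by omega⟩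
    · exact .inr ⟨(k - i - 1).toNat, by omega, by omega⟩
  have disj : Disjoint ((range p).image fun j : ℕ ↦ i - (j + 1))
      ((range r).image fun j : ℕ ↦ i + (j + 1)) := by
    simp only [disjoint_left, mem_image]
    rintro _ ⟨j, -, rfl⟩ ⟨j', -, h⟩
    omega
  rw [split, prod_union disj, prod_image (by intro; grind), prod_image (by intro; grind)]

section FiniteProducts

variable {K : Type*} [Field K]

/-- The finite `q`-Pochhammer symbol `(a; q)_n = ∏_{k < n} (1 - a q^k)`. -/
def qPochhammer (a q : K) (n : ℕ) : K := ∏ k ∈ range n, (1 - a * q ^ k)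

variable {a b : K}

theorem prod_Icc_erase_node_ratio (hab : a * b ≠ 0) (i : ℤ) (p r : ℕ) :
    ∏ k ∈ (Icc (i - p) (i + r)).erase i,
        ((a * b) ^ (-i) - a * (a * b) ^ (-k)) / ((a * b) ^ (-i) - (a * b) ^ (-k)) =
      a ^ r * (qPochhammer (a * (a * b)) (a * b) p / qPochhammer (a * b) (a * b) p) *
        (qPochhammer b (a * b) r / qPochhammer (a * b) (a * b) r) := by
  have below (j : ℕ) : ((a * b) ^ (-i) - a * (a * b) ^ (-(i - (j + 1) : ℤ))) /
      ((a * b) ^ (-i) - (a * b) ^ (-(i - (j + 1) : ℤ))) =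
      (1 - a * (a * b) * (a * b) ^ j) / (1 - a * b * (a * b) ^ j) := by
    have shift : (a * b) ^ (-(i - (j + 1) : ℤ)) = (a * b) ^ (-i) * (a * b) ^ (j + 1) := by
      rw [← zpow_natCast, ← zpow_add₀ hab]; congr 1; push_cast; ring
    rw [shift, ← mul_div_mul_left (1 - _) _ (zpow_ne_zero (-i) hab)]
    congr 1 <;> ring
  have above (j : ℕ) : ((a * b) ^ (-i) - a * (a * b) ^ (-(i + (j + 1) : ℤ))) /
      ((a * b) ^ (-i) - (a * b) ^ (-(i + (j + 1) : ℤ))) =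
      a * (1 - b * (a * b) ^ j) / (1 - a * b * (a * b) ^ j) := by
    have shift : (a * b) ^ (-i) = (a * b) ^ (-(i + (j + 1) : ℤ)) * (a * b) ^ (j + 1) := by
      rw [← zpow_natCast, ← zpow_add₀ hab]; congr 1; push_cast; ring
    rw [shift, ← mul_div_mul_left (a * _) _
      (neg_ne_zero.2 (zpow_ne_zero (-(i + (j + 1) : ℤ)) hab))]
    congr 1 <;> ring
  rw [prod_Icc_erase, prod_congr rfl fun j _ ↦ below j, prod_congr rfl fun j _ ↦ above j]
  simp only [prod_div_distrib, prod_mul_distrib, prod_const, card_range, qPochhammer]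
  ring

theorem prod_Icc_erase_zero_ratio (hab : a * b ≠ 0) (N : ℕ) :
    ∏ k ∈ (Icc (-N : ℤ) N).erase 0, (a - a * (a * b) ^ (-k)) / (a - (a * b) ^ (-k)) =
      a ^ N * (qPochhammer (a * b) (a * b) N ^ 2 /
        (qPochhammer (a * (a * b)) (a * b) N * qPochhammer b (a * b) N)) := by
  have below (j : ℕ) : (a - a * (a * b) ^ (-(0 - (j + 1) : ℤ))) /
      (a - (a * b) ^ (-(0 - (j + 1) : ℤ))) =
      (1 - a * b * (a * b) ^ j) / (1 - b * (a * b) ^ j) := by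
    rw [neg_sub, sub_zero, ← Nat.cast_add_one, zpow_natCast,
      ← mul_div_mul_left (1 - _) _ (left_ne_zero_of_mul hab)]
    congr 1 <;> ring
  have above (j : ℕ) : (a - a * (a * b) ^ (-(0 + (j + 1) : ℤ))) /
      (a - (a * b) ^ (-(0 + (j + 1) : ℤ))) =
      a * (1 - a * b * (a * b) ^ j) / (1 - a * (a * b) * (a * b) ^ j) := by
    rw [zero_add, ← Nat.cast_add_one, zpow_neg, zpow_natCast,
      ← mul_div_mul_left (a - _) _ (neg_ne_zero.2 (pow_ne_zero (j + 1) hab))]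
    have cancel := mul_inv_cancel₀ (pow_ne_zero (j + 1) hab)
    congr 1
    · linear_combination a * cancel
    · linear_combination cancel
  have split := prod_Icc_erase (fun k : ℤ ↦ (a - a * (a * b) ^ (-k)) / (a - (a * b) ^ (-k))) 0 N N
  rw [zero_sub, zero_add] at split
  rw [split, prod_congr rfl fun j _ ↦ below j, prod_congr rfl fun j _ ↦ above j]
  simp only [prod_div_distrib, prod_mul_distrib, prod_const, card_range, qPochhammer]
  ring

theorem zpow_mul_zpow_div_sq (hab : a * b ≠ 0) (n i : ℤ) :
    a ^ n * (b ^ i / (1 - a * (a * b) ^ i) ^ 2) =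
      a ^ (n - i) * ((a * b) ^ (-i) / ((a * b) ^ (-i) - a) ^ 2) := by
  have hi : (a * b) ^ i ≠ 0 := zpow_ne_zero i hab
  have power : a ^ n * b ^ i = a ^ (n - i) * (a * b) ^ i := by
    rw [mul_zpow, ← mul_assoc, ← zpow_add₀ (left_ne_zero_of_mul hab), sub_add_cancel]
  have denominator : (a * b) ^ (-i) - a = (1 - a * (a * b) ^ i) / (a * b) ^ i := by
    rw [zpow_neg, sub_div, one_div, mul_div_cancel_right₀ _ hi]
  rw [← mul_div_assoc, power, denominator, zpow_neg]
  field_simp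

theorem zpow_neg_add_one_div_one_sub_sq (ha : a ≠ 0) (hb : b ≠ 0) (k : ℕ) :
    b ^ (-(k + 1 : ℤ)) / (1 - a * (a * b) ^ (-(k + 1 : ℤ))) ^ 2 =
      a ^ k * (b * (a * b) ^ k / (1 - b * (a * b) ^ k) ^ 2) := by
  have reflected := zpow_mul_zpow_div_sq (mul_ne_zero ha hb) 0 (-(k + 1 : ℤ))
  rw [zpow_zero, one_mul, sub_neg_eq_add, zero_add, neg_neg, ← Nat.cast_add_one, zpow_natCast,
    zpow_natCast] at reflected
  have denominator : ((a * b) ^ (k + 1) - a) ^ 2 = a ^ 2 * (1 - b * (a * b) ^ k) ^ 2 := by ring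
  rw [← Nat.cast_add_one, reflected, denominator, ← mul_div_mul_left (b * _) _ (pow_ne_zero 2 ha)]
  ring

theorem sum_Icc_qPochhammer_mul_zpow_div_sq (hinj : Function.Injective fun n : ℤ ↦ (a * b) ^ n)
    (ha : ∀ n : ℤ, a * (a * b) ^ n ≠ 1) (N : ℕ) :
    (1 - a) ^ 2 * ∑ i ∈ Icc (-N : ℤ) N,
        qPochhammer (a * (a * b)) (a * b) (N + i).toNat /
          qPochhammer (a * b) (a * b) (N + i).toNat *
        (qPochhammer b (a * b) (N - i).toNat / qPochhammer (a * b) (a * b) (N - i).toNat) *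
        (b ^ i / (1 - a * (a * b) ^ i) ^ 2) =
      qPochhammer (a * b) (a * b) N ^ 2 /
        (qPochhammer (a * (a * b)) (a * b) N * qPochhammer b (a * b) N) := by
  have hab : a * b ≠ 0 := fun h ↦ by simpa using hinj (a₁ := 1) (a₂ := 2) (by simp [h])
  have ha0 : a ≠ 0 := left_ne_zero_of_mul hab
  have ne_node (k : ℤ) : a * (a * b) ^ (-0 : ℤ) ≠ (a * b) ^ (-k) := by
    simpa [zpow_neg, ← mul_eq_one_iff_eq_inv₀ (zpow_ne_zero k hab)] using ha k
  have partial_fractions := sum_prod_erase_mul_div_sub_mul_sq (s := Icc (-N : ℤ) N)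
    (x := fun k : ℤ ↦ (a * b) ^ (-k)) (hinj.comp neg_injective).injOn (c := a) (l := 0)
    (by simp) fun k _ ↦ ne_node k
  simp only [neg_zero, zpow_zero, mul_one] at partial_fractions
  rw [prod_Icc_erase_zero_ratio hab] at partial_fractions
  rw [← mul_right_inj' (pow_ne_zero N ha0), ← partial_fractions, mul_sum, mul_sum]
  refine sum_congr rfl fun i hi ↦ ?_
  obtain ⟨p, hp⟩ : ∃ p : ℕ, N + i = p := ⟨(N + i).toNat, by grind⟩
  obtain ⟨r, hr⟩ : ∃ r : ℕ, N - i = r := ⟨(N - i).toNat, by grind⟩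
  have weight := zpow_mul_zpow_div_sq hab N i
  rw [hr, zpow_natCast, zpow_natCast] at weight
  rw [hp, hr, Int.toNat_natCast, Int.toNat_natCast, show (-N : ℤ) = i - p by omega,
    show Icc (i - p) (N : ℤ) = Icc (i - p) (i + r) by congr; omega, prod_Icc_erase_node_ratio hab]
  linear_combination (1 - a) ^ 2 * (qPochhammer (a * (a * b)) (a * b) p /
    qPochhammer (a * b) (a * b) p * (qPochhammer b (a * b) r /
    qPochhammer (a * b) (a * b) r)) * weight

end FiniteProducts

section InfiniteProducts

variable {𝕜 : Type*} [NormedField 𝕜]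

/-- The infinite `q`-Pochhammer symbol `(a; q)_∞ = ∏_{k ≥ 0} (1 - a q^k)`. -/
noncomputable def qPochhammerInf (a q : 𝕜) : 𝕜 := ∏' k : ℕ, (1 - a * q ^ k)

theorem norm_mul_pow_lt_one {c q : 𝕜} (hc : ‖c‖ < 1) (hq : ‖q‖ ≤ 1) (m : ℕ) : ‖c * q ^ m‖ < 1 := by
  rw [norm_mul, norm_pow]
  exact mul_lt_one_of_nonneg_of_lt_one_left (norm_nonneg c) hc (pow_le_one₀ (norm_nonneg q) hq)

theorem norm_mul_lt_one {a b : 𝕜} (ha : ‖a‖ < 1) (hb : ‖b‖ < 1) : ‖a * b‖ < 1 := by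
  simpa using norm_mul_pow_lt_one ha hb.le 1

theorem ne_one_of_norm_lt_one {z : 𝕜} (hz : ‖z‖ < 1) : z ≠ 1 := by
  rintro rfl
  simp at hz

theorem mul_zpow_ne_one {a b : 𝕜} (ha0 : a ≠ 0) (hb0 : b ≠ 0) (ha : ‖a‖ < 1) (hb : ‖b‖ < 1)
    (n : ℤ) : a * (a * b) ^ n ≠ 1 := by
  have hab : ‖a * b‖ ≤ 1 := (norm_mul_lt_one ha hb).le
  rcases n with m | m
  · rw [Int.ofNat_eq_natCast, zpow_natCast]
    exact ne_one_of_norm_lt_one (norm_mul_pow_lt_one ha hab m)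
  · rw [zpow_negSucc, Ne, mul_inv_eq_one₀ (pow_ne_zero _ (mul_ne_zero ha0 hb0)), pow_succ',
      mul_assoc, left_eq_mul₀ ha0]
    exact ne_one_of_norm_lt_one (norm_mul_pow_lt_one hb hab m)

theorem zpow_right_injective_of_norm_lt_one {q : 𝕜} (hq0 : q ≠ 0) (hq : ‖q‖ < 1) :
    Function.Injective fun n : ℤ ↦ q ^ n := fun m n h ↦
  zpow_right_injective₀ (norm_pos_iff.2 hq0) hq.ne (by simpa using congrArg norm h)

variable {a q : 𝕜}

theorem summable_norm_neg_mul_pow (a : 𝕜) (hq : ‖q‖ < 1) : Summable fun k : ℕ ↦ ‖-(a * q ^ k)‖ := by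
  simpa using (summable_geometric_of_lt_one (norm_nonneg q) hq).mul_left ‖a‖

variable [CompleteSpace 𝕜]

theorem multipliable_one_sub_mul_pow (a : 𝕜) (hq : ‖q‖ < 1) :
    Multipliable fun k : ℕ ↦ 1 - a * q ^ k := by
  simpa [sub_eq_add_neg] using multipliable_one_add_of_summable (summable_norm_neg_mul_pow a hq)

theorem tendsto_qPochhammer (a : 𝕜) (hq : ‖q‖ < 1) :
    Tendsto (qPochhammer a q) atTop (𝓝 (qPochhammerInf a q)) :=
  (multipliable_one_sub_mul_pow a hq).tendsto_prod_tprod_nat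

theorem qPochhammerInf_ne_zero (ha : ‖a‖ < 1) (hq : ‖q‖ < 1) : qPochhammerInf a q ≠ 0 := by
  have factor_ne_zero (k : ℕ) : 1 + -(a * q ^ k) ≠ 0 := by
    rw [← sub_eq_add_neg]
    exact sub_ne_zero.2 (ne_one_of_norm_lt_one (norm_mul_pow_lt_one ha hq.le k)).symm
  simpa [qPochhammerInf, sub_eq_add_neg] using
    tprod_one_add_ne_zero_of_summable factor_ne_zero (summable_norm_neg_mul_pow a hq)

theorem qPochhammerInf_eq_one_sub_mul (a : 𝕜) (hq : ‖q‖ < 1) :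
    qPochhammerInf a q = (1 - a) * qPochhammerInf (a * q) q := by
  have shifted := multipliable_one_sub_mul_pow (a * q) hq
  simp only [mul_assoc, ← pow_succ'] at shifted
  have split := tprod_eq_zero_mul' (f := fun k ↦ 1 - a * q ^ k) shifted
  simpa only [qPochhammerInf, mul_assoc, ← pow_succ', pow_zero, mul_one] using split

theorem qPochhammerInf_eq_mul_sq (a : 𝕜) (hq : ‖q‖ < 1) :
    qPochhammerInf a q = qPochhammerInf a (q ^ 2) * qPochhammerInf (a * q) (q ^ 2) := by
  have hq2 : ‖q ^ 2‖ < 1 := by simpa using pow_lt_one₀ (norm_nonneg q) hq two_ne_zero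
  have even := multipliable_one_sub_mul_pow a hq2
  have odd := multipliable_one_sub_mul_pow (a * q) hq2
  simp only [mul_assoc, ← pow_mul, ← pow_succ'] at even odd
  simp only [qPochhammerInf, mul_assoc, ← pow_mul, ← pow_succ']
  exact (tprod_even_mul_odd (f := fun k ↦ 1 - a * q ^ k) even odd).symm

end InfiniteProducts

section BilateralSeries

variable {𝕜 : Type*} [NormedField 𝕜]

theorem hasSum_add_one_mul_geometric {z : 𝕜} (hz : ‖z‖ < 1) :
    HasSum (fun n : ℕ ↦ ((n : 𝕜) + 1) * z ^ n) (1 / (1 - z) ^ 2) := by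
  simpa using hasSum_choose_mul_geometric_of_norm_lt_one 1 hz

theorem tendsto_sum_Icc_mul_mul [CompleteSpace 𝕜] {u v : ℕ → 𝕜} {U V : 𝕜} {g : ℤ → 𝕜}
    (hu : Tendsto u atTop (𝓝 U)) (hv : Tendsto v atTop (𝓝 V)) (hg : Summable fun i ↦ ‖g i‖) :
    Tendsto (fun N : ℕ ↦ ∑ i ∈ Icc (-N : ℤ) N, u (N + i).toNat * v (N - i).toNat * g i) atTop
      (𝓝 (U * V * ∑' i, g i)) := by
  obtain ⟨C, hC⟩ := (Metric.isBounded_range_of_tendsto u hu).exists_norm_le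
  obtain ⟨D, hD⟩ := (Metric.isBounded_range_of_tendsto v hv).exists_norm_le
  have norm_u_le (n : ℕ) : ‖u n‖ ≤ C := hC _ ⟨n, rfl⟩
  have norm_v_le (n : ℕ) : ‖v n‖ ≤ D := hD _ ⟨n, rfl⟩
  have hC0 : 0 ≤ C := (norm_nonneg _).trans (norm_u_le 0)
  have hD0 : 0 ≤ D := (norm_nonneg _).trans (norm_v_le 0)
  have toNat_add (i : ℤ) : Tendsto (fun N : ℕ ↦ (N + i).toNat) atTop atTop :=
    tendsto_atTop.2 fun m ↦ by filter_upwards [eventually_ge_atTop (m + i.natAbs)]; omega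
  have toNat_sub (i : ℤ) : Tendsto (fun N : ℕ ↦ (N - i).toNat) atTop atTop :=
    toNat_add (-i)
  rw [← tsum_mul_left]
  have sum_eq_tsum (N : ℕ) := sum_eq_tsum_indicator
    (fun i : ℤ ↦ u (N + i).toNat * v (N - i).toNat * g i) (Icc (-N : ℤ) N)
  simp only [sum_eq_tsum, Set.indicator_apply, mem_coe]
  refine tendsto_tsum_of_dominated_convergence (hg.mul_left (C * D)) (fun i ↦ ?_)
    (.of_forall fun N i ↦ ?_)
  · refine (((hu.comp (toNat_add i)).mul (hv.comp (toNat_sub i))).mul_const (g i)).congr' ?_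
    filter_upwards [eventually_ge_atTop i.natAbs] with N hN
    rw [if_pos (by grind)]
    rfl
  · split_ifs
    · rw [norm_mul, norm_mul]
      gcongr
      exacts [norm_u_le _, norm_v_le _]
    · rw [norm_zero]
      positivity

variable {a b : 𝕜}

theorem summable_mul_pow_mul_pow [CompleteSpace 𝕜] (ha : ‖a‖ < 1) (hb : ‖b‖ < 1) {c : ℕ × ℕ → 𝕜}
    (hc : ∀ p, ‖c p‖ ≤ ((p.1 : ℝ) + 1) * ((p.2 : ℝ) + 1)) :
    Summable fun p : ℕ × ℕ ↦ c p * ((a * b) ^ (p.1 * p.2) * (a ^ p.1 * b ^ p.2)) := by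
  have dominating := (hasSum_add_one_mul_geometric (z := ‖a‖) (by simpa)).summable.mul_of_nonneg
    (hasSum_add_one_mul_geometric (z := ‖b‖) (by simpa)).summable
    (fun k ↦ by positivity) (fun l ↦ by positivity)
  refine .of_norm_bounded dominating fun p ↦ ?_
  have norm_pow_le : ‖(a * b) ^ (p.1 * p.2)‖ ≤ 1 := by
    rw [norm_pow, norm_mul]
    exact pow_le_one₀ (by positivity) (mul_le_one₀ ha.le (norm_nonneg b) hb.le)
  calc ‖c p * ((a * b) ^ (p.1 * p.2) * (a ^ p.1 * b ^ p.2))‖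
      = ‖c p‖ * (‖(a * b) ^ (p.1 * p.2)‖ * (‖a‖ ^ p.1 * ‖b‖ ^ p.2)) := by
        rw [norm_mul, norm_mul, norm_mul, norm_pow a, norm_pow b]
    _ ≤ ((p.1 + 1) * (p.2 + 1)) * (1 * (‖a‖ ^ p.1 * ‖b‖ ^ p.2)) := by
        gcongr
        exact hc p
    _ = _ := by ring

theorem hasSum_zpow_div_one_sub_sq [CompleteSpace 𝕜] (ha0 : a ≠ 0) (hb0 : b ≠ 0)
    (ha : ‖a‖ < 1) (hb : ‖b‖ < 1) :
    HasSum (fun n : ℤ ↦ b ^ n / (1 - a * (a * b) ^ n) ^ 2)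
      (∑' p : ℕ × ℕ, ((p.1 : 𝕜) + p.2 + 1) * ((a * b) ^ (p.1 * p.2) * (a ^ p.1 * b ^ p.2))) := by
  have left := summable_mul_pow_mul_pow ha hb (c := fun p ↦ (p.1 : 𝕜) + 1) fun p ↦ by
    have norm_add_one_le : ‖(p.1 : 𝕜) + 1‖ ≤ p.1 + 1 := by
      simpa using Nat.norm_cast_le (α := 𝕜) (p.1 + 1)
    nlinarith [p.1.cast_nonneg (α := ℝ), p.2.cast_nonneg (α := ℝ)]
  have right := summable_mul_pow_mul_pow ha hb (c := fun p ↦ (p.2 : 𝕜)) fun p ↦ by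
    have norm_le : ‖(p.2 : 𝕜)‖ ≤ p.2 := by simpa using Nat.norm_cast_le (α := 𝕜) p.2
    nlinarith [p.1.cast_nonneg (α := ℝ), p.2.cast_nonneg (α := ℝ)]
  have hQ : ‖a * b‖ ≤ 1 := (norm_mul_lt_one ha hb).le
  have nonneg_part : HasSum (fun l : ℕ ↦ b ^ l * (1 / (1 - a * (a * b) ^ l) ^ 2)) _ :=
    ((Equiv.prodComm ℕ ℕ).hasSum_iff.2 left.hasSum).prod_fiberwise fun l ↦
      ((hasSum_add_one_mul_geometric (norm_mul_pow_lt_one ha hQ l)).mul_left (b ^ l)).congr_fun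
        fun k ↦ by simp only [Function.comp_apply, Equiv.prodComm_apply, Prod.swap_prod_mk]; ring
  have neg_part :
      HasSum (fun k : ℕ ↦ a ^ k * (b * (a * b) ^ k / (1 - b * (a * b) ^ k) ^ 2)) _ :=
    right.hasSum.prod_fiberwise fun k ↦
      ((hasSum_coe_mul_geometric_of_norm_lt_one (norm_mul_pow_lt_one hb hQ k)).mul_left
        (a ^ k)).congr_fun fun l ↦ by ring
  have total := left.tsum_add right
  simp only [← add_mul, add_right_comm _ (1 : 𝕜)] at total
  rw [total]
  refine .of_nat_of_neg_add_one ?_ ?_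
  · simpa only [zpow_natCast, mul_one_div] using nonneg_part
  · simpa only [zpow_neg_add_one_div_one_sub_sq ha0 hb0] using neg_part

theorem summable_norm_zpow_div_one_sub_sq (ha0 : a ≠ 0) (hb0 : b ≠ 0) (ha : ‖a‖ < 1)
    (hb : ‖b‖ < 1) : Summable fun n : ℤ ↦ ‖b ^ n / (1 - a * (a * b) ^ n) ^ 2‖ := by
  have ha0' : ‖a‖ ≠ 0 := norm_ne_zero_iff.2 ha0
  have hb0' : ‖b‖ ≠ 0 := norm_ne_zero_iff.2 hb0
  have ha' : ‖‖a‖‖ < 1 := by simpa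
  have hb' : ‖‖b‖‖ < 1 := by simpa
  refine .of_nonneg_of_le (fun n ↦ norm_nonneg _) (fun n ↦ ?_)
    (hasSum_zpow_div_one_sub_sq ha0' hb0' ha' hb').summable
  rw [norm_div, norm_pow, norm_zpow]
  have denominator_ne := sub_ne_zero.2 (mul_zpow_ne_one ha0' hb0' ha' hb' n).symm
  have norm_sub_le := abs_norm_sub_norm_le (1 : 𝕜) (a * (a * b) ^ n)
  rw [norm_one, norm_mul, norm_zpow, norm_mul] at norm_sub_le
  rw [← sq_abs (1 - ‖a‖ * (‖a‖ * ‖b‖) ^ n)]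
  gcongr

theorem tsum_add_add_one_mul_mul_pow [CompleteSpace 𝕜] (ha0 : a ≠ 0) (hb0 : b ≠ 0)
    (ha : ‖a‖ < 1) (hb : ‖b‖ < 1) :
    ∑' p : ℕ × ℕ, ((p.1 : 𝕜) + p.2 + 1) * ((a * b) ^ (p.1 * p.2) * (a ^ p.1 * b ^ p.2)) =
      qPochhammerInf (a * b) (a * b) ^ 4 /
        (qPochhammerInf a (a * b) * qPochhammerInf b (a * b)) ^ 2 := by
  have hQ : ‖a * b‖ < 1 := norm_mul_lt_one ha hb
  have haQ : ‖a * (a * b)‖ < 1 := norm_mul_lt_one ha hQ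
  have Q_ne := qPochhammerInf_ne_zero hQ hQ
  have aQ_ne := qPochhammerInf_ne_zero haQ hQ
  have b_ne := qPochhammerInf_ne_zero hb hQ
  have one_sub_ne : 1 - a ≠ 0 := sub_ne_zero.2 (ne_one_of_norm_lt_one ha).symm
  have limit_Q := tendsto_qPochhammer (a * b) hQ
  have limit_aQ := tendsto_qPochhammer (a * (a * b)) hQ
  have limit_b := tendsto_qPochhammer b hQ
  have finite_identity := sum_Icc_qPochhammer_mul_zpow_div_sq
    (zpow_right_injective_of_norm_lt_one (mul_ne_zero ha0 hb0) hQ) (mul_zpow_ne_one ha0 hb0 ha hb)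
  have limit_left := (tendsto_sum_Icc_mul_mul (limit_aQ.div limit_Q Q_ne)
    (limit_b.div limit_Q Q_ne) (summable_norm_zpow_div_one_sub_sq ha0 hb0 ha hb)).const_mul
    ((1 - a) ^ 2)
  have limit_right := (limit_Q.pow 2).div (limit_aQ.mul limit_b) (mul_ne_zero aQ_ne b_ne)
  have identity : (1 - a) ^ 2 * (qPochhammerInf (a * (a * b)) (a * b) /
      qPochhammerInf (a * b) (a * b) *
      (qPochhammerInf b (a * b) / qPochhammerInf (a * b) (a * b)) *
      ∑' n : ℤ, b ^ n / (1 - a * (a * b) ^ n) ^ 2) =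
      qPochhammerInf (a * b) (a * b) ^ 2 /
        (qPochhammerInf (a * (a * b)) (a * b) * qPochhammerInf b (a * b)) :=
    tendsto_nhds_unique limit_left
    (limit_right.congr fun N ↦ (finite_identity N).symm)
  rw [(hasSum_zpow_div_one_sub_sq ha0 hb0 ha hb).tsum_eq] at identity
  rw [qPochhammerInf_eq_one_sub_mul a hQ]
  generalize qPochhammerInf (a * (a * b)) (a * b) = aQ at aQ_ne identity ⊢
  field_simp at identity ⊢
  linear_combination identity

end BilateralSeries

section Psi

theorem eulerF_eq_qPochhammerInf (x : ℂ) : eulerF x = qPochhammerInf x x := by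
  simp only [eulerF, qPochhammerInf, pow_succ']

theorem eulerF_eq_mul_eulerF_sq {x : ℂ} (hx : ‖x‖ < 1) :
    eulerF x = qPochhammerInf (x ^ 3) (x ^ 4) * qPochhammerInf x (x ^ 4) * eulerF (x ^ 2) := by
  have hx2 : ‖x ^ 2‖ < 1 := by simpa using pow_lt_one₀ (norm_nonneg x) hx two_ne_zero
  rw [eulerF_eq_qPochhammerInf, eulerF_eq_qPochhammerInf, qPochhammerInf_eq_mul_sq x hx,
    qPochhammerInf_eq_mul_sq x hx2]
  ring_nf

theorem Psi2222_eq_mul_tsum (x : ℂ) : Psi2222 x = x ^ 3 * ∑' p : ℕ × ℕ, ((p.1 : ℂ) + p.2 + 1) *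
    (((x ^ 4) ^ 3 * x ^ 4) ^ (p.1 * p.2) * (((x ^ 4) ^ 3) ^ p.1 * (x ^ 4) ^ p.2)) := by
  rw [Psi2222, ← tsum_mul_left]
  exact tsum_congr fun p ↦ by ring

end Psi

/-- `Ψ(x) = x³ F(x⁸)²F(x¹⁶)⁴/F(x⁴)²`, i.e. `φ = η(q_d⁸)²η(q_d¹⁶)⁴/η(q_d⁴)²`. -/
theorem psi2222_eq_eta_quotient (x : ℂ) (hx : ‖x‖ < 1) :
    Psi2222 x = x ^ 3 * eulerF (x ^ 8) ^ 2 * eulerF (x ^ 16) ^ 4 / eulerF (x ^ 4) ^ 2 := by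
  rcases eq_or_ne x 0 with rfl | h0
  · simp [Psi2222_eq_mul_tsum]
  have norm_pow_lt (n : ℕ) (hn : n ≠ 0) : ‖x ^ n‖ < 1 := by
    simpa using pow_lt_one₀ (norm_nonneg x) hx hn
  have hx4 : ‖x ^ 4‖ < 1 := norm_pow_lt 4 four_ne_zero
  have hx8 : ‖x ^ (4 * 2)‖ < 1 := norm_pow_lt 8 (by norm_num)
  have eulerF_ne_zero : eulerF (x ^ (4 * 2)) ≠ 0 := by
    rw [eulerF_eq_qPochhammerInf]
    exact qPochhammerInf_ne_zero hx8 hx8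
  have series := tsum_add_add_one_mul_mul_pow (pow_ne_zero 3 (pow_ne_zero 4 h0))
    (pow_ne_zero 4 h0) (by simpa only [← pow_mul] using norm_pow_lt 12 (by norm_num)) hx4
  rw [← pow_succ, ← eulerF_eq_qPochhammerInf, ← pow_mul x 4 4] at series
  have dissection := eulerF_eq_mul_eulerF_sq hx4
  rw [← pow_mul x 4 2, ← pow_mul x 4 4] at dissection
  rw [Psi2222_eq_mul_tsum, ← pow_succ, ← pow_mul x 4 4, series, dissection]
  field_simp
end
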